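/- For every n ≥ 2, there exists a partition of ℝ^n into countably many pairwise disjoint measurable regions, each of Lebesgue measure 1 and each a bounded subset of ℝ^n, whose union is all of ℝ^n, and whose limiting perimeter-per-volume ratio equals the infimum of the limiting perimeter-per-volume ratios over all partitions of ℝ^n into countably many pairwise disjoint measurable regions of Lebesgue measure 1. That is, the minimizing partition can be chosen so that every region is bounded. -/

import Mathlib

/-!
Let `L` be the infimum and let `S k` be partitions whose limiting ratios tend to `L`. On the shell
`ρ k ≤ ‖x‖ < ρ (k + 1)` use `S k`, with radii growing so fast that all earlier shells and the
interface spheres are negligible at scale `ρ (k + 1)`. Inside the shell of `S (k + 1)`, the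
perimeter accumulated from `ρ (k + 1)` to `r` is the difference of the perimeters of `S (k + 1)` at
`r` and at `ρ (k + 1)`. The first is asymptotically at most `L` times the volume, and since the
limiting ratio of `S (k + 1)` is at least `L`, the radius `ρ (k + 1)` can be chosen so that the
second is almost at least `L` times the volume. Hence the glued family has limiting ratio at most
`L`.

Its regions are bounded, but cutting has lowered their volumes. The deficits are made up by pairwise
disjoint balls of bounded radius centred on a sparse sequence far from the origin. Ball `j` only
meets vectors of norm at least `j`, so the added perimeter in the ball of radius `r` is `O(r)`,
which is `o(rⁿ)` because `n ≥ 2`.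
-/

open MeasureTheory Set Metric Filter

/-- The perimeter-per-volume ratio at radius `r` of a countable family of regions in `ℝⁿ`. -/
noncomputable def perimVolRatio (n : ℕ) (R : ℕ → Set (EuclideanSpace ℝ (Fin n))) (r : ℝ) :
    ENNReal :=
  μH[(n : ℝ) - 1] ((⋃ j, frontier (R j)) ∩ closedBall 0 r) /
    volume (closedBall (0 : EuclideanSpace ℝ (Fin n)) r)

/-- The limiting perimeter-per-volume ratio: `limsup_{r → ∞}` of the ratio at radius `r`. -/
noncomputable def limitRatio (n : ℕ) (R : ℕ → Set (EuclideanSpace ℝ (Fin n))) : ENNReal :=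
  Filter.limsup (perimVolRatio n R) Filter.atTop

/-- A partition of `ℝⁿ` into unit volumes: countably many pairwise disjoint measurable sets,
each of Lebesgue measure 1, whose union is all of `ℝⁿ`. -/
def IsUnitPartition (n : ℕ) (R : ℕ → Set (EuclideanSpace ℝ (Fin n))) : Prop :=
  Pairwise (Function.onFun Disjoint R) ∧ (∀ j, MeasurableSet (R j)) ∧
    (∀ j, volume (R j) = 1) ∧ (⋃ j, R j) = univ

open Module Topology
open scoped ENNReal Pointwise RealInnerProductSpace

section Sphere

theorem hausdorffMeasure_image_lt_top_of_contDiff {E F : Type*} [NormedAddCommGroup E]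
    [NormedSpace ℝ E] [FiniteDimensional ℝ E] [MeasurableSpace E] [BorelSpace E]
    [NormedAddCommGroup F] [NormedSpace ℝ F] [MeasurableSpace F] [BorelSpace F] {f : E → F}
    (hf : ContDiff ℝ 1 f) {K : Set E} (hK : IsCompact K) : μH[finrank ℝ E] (f '' K) < ∞ := by
  obtain ⟨C, hC⟩ :=
    (hf.locallyLipschitz.locallyLipschitzOn (s := K)).exists_lipschitzOnWith_of_compact hK
  refine (hC.hausdorffMeasure_image_le (Nat.cast_nonneg _)).trans_lt ?_
  exact ENNReal.mul_lt_top (by finiteness) hK.measure_lt_top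

theorem hausdorffMeasure_sphere_le {E : Type*} [NormedAddCommGroup E] [NormedSpace ℝ E]
    [Nontrivial E] [MeasurableSpace E] [BorelSpace E] {d : ℝ} (hd : 0 ≤ d) (x : E) {r : ℝ}
    (hr : 0 ≤ r) :
    μH[d] (sphere x r) ≤ ENNReal.ofReal r ^ d * μH[d] (sphere (0 : E) 1) := by
  have hsphere : sphere x r = x +ᵥ (r • ·) '' sphere (0 : E) 1 := by
    rw [image_smul, _root_.smul_sphere _ _ zero_le_one, vadd_sphere, smul_zero, vadd_eq_add,
      add_zero, Real.norm_of_nonneg hr, mul_one]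
  rw [hsphere, measure_vadd]
  refine ((lipschitzWith_smul r).hausdorffMeasure_image_le hd _).trans_eq ?_
  rw [← enorm_eq_nnnorm, Real.enorm_of_nonneg hr]

variable {E : Type*} [NormedAddCommGroup E] [InnerProductSpace ℝ E]

theorem halfSphere_subset_image_stereoInvFunAux {v : E} (hv : ‖v‖ = 1) :
    {x ∈ sphere (0 : E) 1 | ⟪v, x⟫ ≤ 0} ⊆
      (fun w : (ℝ ∙ v)ᗮ => stereoInvFunAux v w) '' closedBall 0 2 := by
  rintro x ⟨hx, hvx⟩
  have hxv : x ≠ v := by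
    rintro rfl
    simp [hv] at hvx
    linarith
  refine ⟨stereoToFun v x, ?_, congrArg Subtype.val (stereo_left_inv hv (x := ⟨x, hx⟩) hxv)⟩
  have hproj : ‖(ℝ ∙ v)ᗮ.orthogonalProjectionOnto x‖ ≤ 1 :=
    ((ℝ ∙ v)ᗮ.norm_orthogonalProjectionOnto_apply_le x).trans_eq (mem_sphere_zero_iff_norm.1 hx)
  have hcoef : ‖2 / (1 - ⟪v, x⟫)‖ ≤ 2 := by
    rw [Real.norm_of_nonneg (by positivity [sub_nonneg.2 (hvx.trans zero_le_one)])]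
    exact div_le_self zero_le_two (by linarith)
  rw [mem_closedBall_zero_iff, stereoToFun_apply, norm_smul]
  exact (mul_le_mul hcoef hproj (norm_nonneg _) zero_le_two).trans_eq (mul_one 2)

variable [FiniteDimensional ℝ E] [Nontrivial E] [MeasurableSpace E] [BorelSpace E]

theorem hausdorffMeasure_unitSphere_lt_top :
    μH[(finrank ℝ E : ℝ) - 1] (sphere (0 : E) 1) < ∞ := by
  obtain ⟨v, hv⟩ := exists_norm_eq E zero_le_one
  have half_lt_top {u : E} (hu : ‖u‖ = 1) :
      μH[(finrank ℝ E : ℝ) - 1] {x ∈ sphere (0 : E) 1 | ⟪u, x⟫ ≤ 0} < ∞ := by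
    have hdim : (finrank ℝ E : ℝ) - 1 = finrank ℝ (ℝ ∙ u)ᗮ := by
      rw [← (ℝ ∙ u).finrank_add_finrank_orthogonal,
        finrank_span_singleton (norm_ne_zero_iff.1 (hu ▸ one_ne_zero))]
      push_cast
      ring
    rw [hdim]
    exact (measure_mono (halfSphere_subset_image_stereoInvFunAux hu)).trans_lt
      (hausdorffMeasure_image_lt_top_of_contDiff
        (contDiff_stereoInvFunAux.comp (ℝ ∙ u)ᗮ.subtypeL.contDiff) (isCompact_closedBall 0 2))
  have hcover : sphere (0 : E) 1 ⊆
      {x ∈ sphere (0 : E) 1 | ⟪v, x⟫ ≤ 0} ∪ {x ∈ sphere (0 : E) 1 | ⟪-v, x⟫ ≤ 0} := fun x hx =>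
    (le_total ⟪v, x⟫ 0).imp (⟨hx, ·⟩) fun h => ⟨hx, by simpa using h⟩
  exact (measure_mono hcover).trans_lt
    (measure_union_lt_top (half_lt_top hv) (half_lt_top ((norm_neg v).trans hv)))

end Sphere

section Volume

variable {E : Type*} [NormedAddCommGroup E] [NormedSpace ℝ E] [FiniteDimensional ℝ E]
  [MeasurableSpace E] [BorelSpace E] (μ : Measure E) [μ.IsAddHaarMeasure]

theorem tendsto_rpow_div_addHaar_closedBall_atTop (x : E) {d : ℝ} (hd : d < finrank ℝ E) :
    Tendsto (fun r => ENNReal.ofReal r ^ d / μ (closedBall x r)) atTop (𝓝 0) := by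
  have hunit_pos : μ (ball 0 1) ≠ 0 := (measure_ball_pos μ 0 one_pos).ne'
  have hdenom : Tendsto (fun r => ENNReal.ofReal r ^ (finrank ℝ E - d) * μ (ball 0 1)) atTop
      (𝓝 ∞) := by
    rw [← ENNReal.top_mul hunit_pos]
    refine ENNReal.Tendsto.mul_const ?_ (.inl ENNReal.top_ne_zero)
    exact (ENNReal.tendsto_rpow_at_top (sub_pos.2 hd)).comp ENNReal.tendsto_ofReal_atTop
  refine (ENNReal.inv_top ▸ tendsto_inv_iff.2 hdenom).congr' ?_
  filter_upwards [eventually_gt_atTop 0] with r hr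
  have hr0 : ENNReal.ofReal r ≠ 0 := (ENNReal.ofReal_pos.2 hr).ne'
  have hpow0 : ENNReal.ofReal r ^ d ≠ 0 := by simp [hr0]
  have hpow_top : ENNReal.ofReal r ^ d ≠ ∞ := ENNReal.rpow_ne_top_of_ne_zero hr0 (by simp)
  rw [Measure.addHaar_closedBall μ x hr.le, ENNReal.ofReal_pow hr.le, ← ENNReal.rpow_natCast,
    ← one_div, ← ENNReal.mul_div_mul_right _ _ hpow0 hpow_top, one_mul, mul_right_comm,
    ← ENNReal.rpow_add _ _ hr0 ENNReal.ofReal_ne_top, sub_add_cancel]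

theorem exists_le_forall_addHaar_ball_eq [Nontrivial E] {w : ℝ≥0∞} (hw : w ≠ ∞) :
    ∃ ρ, ∀ v ≤ w, ∃ t, 0 ≤ t ∧ t ≤ ρ ∧ ∀ x, μ (ball x t) = v := by
  set V := μ (ball 0 1)
  have hV : V ≠ 0 := (measure_ball_pos μ 0 one_pos).ne'
  have hV' : V ≠ ∞ := measure_ball_lt_top.ne
  set root : ℝ≥0∞ → ℝ := fun v => (v / V).toReal ^ (finrank ℝ E : ℝ)⁻¹
  refine ⟨root w, fun v hv => ⟨root v, by positivity, ?_, fun x => ?_⟩⟩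
  · have : w / V ≠ ∞ := ENNReal.div_ne_top hw hV
    simp only [root]
    gcongr
  · have hvV : v / V ≠ ∞ := ENNReal.div_ne_top (ne_top_of_le_ne_top hw hv) hV
    rw [Measure.addHaar_ball μ x (by positivity),
      Real.rpow_inv_natCast_pow ENNReal.toReal_nonneg finrank_pos.ne', ENNReal.ofReal_toReal hvV,
      ENNReal.div_mul_cancel hV hV']

end Volume

section Perimeter

variable {n : ℕ}

/-- The perimeter of a family of regions inside the ball of radius `r`, i.e. the numerator of
`perimVolRatio`. -/
noncomputable def perimeter (n : ℕ) (R : ℕ → Set (EuclideanSpace ℝ (Fin n))) (r : ℝ) : ℝ≥0∞ :=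
  μH[(n : ℝ) - 1] ((⋃ j, frontier (R j)) ∩ closedBall 0 r)

/-- The volume of the closed ball of radius `r` in `ℝⁿ`, i.e. the denominator of
`perimVolRatio`. -/
noncomputable def ballVolume (n : ℕ) (r : ℝ) : ℝ≥0∞ :=
  volume (closedBall (0 : EuclideanSpace ℝ (Fin n)) r)

theorem ballVolume_ne_top (r : ℝ) : ballVolume n r ≠ ∞ :=
  measure_closedBall_lt_top.ne

theorem ballVolume_ne_zero {r : ℝ} (hr : 0 < r) : ballVolume n r ≠ 0 :=
  (measure_closedBall_pos _ _ hr).ne'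

theorem monotone_ballVolume : Monotone (ballVolume n) := fun _ _ h =>
  measure_mono (closedBall_subset_closedBall h)

theorem perimVolRatio_le_iff {R : ℕ → Set (EuclideanSpace ℝ (Fin n))} {r : ℝ} (hr : 0 < r)
    {c : ℝ≥0∞} : perimVolRatio n R r ≤ c ↔ perimeter n R r ≤ c * ballVolume n r :=
  ENNReal.div_le_iff (ballVolume_ne_zero hr) (ballVolume_ne_top r)

theorem eventually_perimeter_le_of_limitRatio_lt {R : ℕ → Set (EuclideanSpace ℝ (Fin n))}
    {c : ℝ≥0∞} (h : limitRatio n R < c) : ∀ᶠ r in atTop, perimeter n R r ≤ c * ballVolume n r := by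
  filter_upwards [eventually_lt_of_limsup_lt h, eventually_gt_atTop 0] with r hr hr0
  exact (perimVolRatio_le_iff hr0).1 hr.le

theorem limitRatio_le_of_eventually_perimeter_le {R : ℕ → Set (EuclideanSpace ℝ (Fin n))}
    {c : ℝ≥0∞} (h : ∀ᶠ r in atTop, perimeter n R r ≤ c * ballVolume n r) :
    limitRatio n R ≤ c := by
  refine limsup_le_of_le (by isBoundedDefault) ?_
  filter_upwards [h, eventually_gt_atTop 0] with r hr hr0
  exact (perimVolRatio_le_iff hr0).2 hr

theorem frequently_le_perimeter_add {R : ℕ → Set (EuclideanSpace ℝ (Fin n))} {c ε : ℝ≥0∞}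
    (hc : c ≠ ∞) (h : c ≤ limitRatio n R) (hε : ε ≠ 0) :
    ∃ᶠ r in atTop, c * ballVolume n r ≤ perimeter n R r + ε * ballVolume n r := by
  obtain rfl | hc0 := eq_or_ne c 0
  · exact Frequently.of_forall fun r => by simp
  have hlt : c - ε < limsup (perimVolRatio n R) atTop :=
    (ENNReal.sub_lt_self hc hc0 hε).trans_le h
  refine ((frequently_lt_of_lt_limsup (by isBoundedDefault) hlt).and_eventually
    (eventually_gt_atTop 0)).mono fun r ⟨hr, hr0⟩ => ?_
  have hcε : (c - ε) * ballVolume n r ≤ perimeter n R r :=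
    (ENNReal.le_div_iff_mul_le (.inl (ballVolume_ne_zero hr0))
      (.inl (ballVolume_ne_top r))).1 hr.le
  calc c * ballVolume n r ≤ (c - ε + ε) * ballVolume n r := by gcongr; exact le_tsub_add
    _ ≤ perimeter n R r + ε * ballVolume n r := by rw [add_mul]; gcongr

theorem limitRatio_le_of_perimeter_le_add {R p : ℕ → Set (EuclideanSpace ℝ (Fin n))}
    {e : ℝ → ℝ≥0∞} (he : Tendsto (fun r => e r / ballVolume n r) atTop (𝓝 0))
    (h : ∀ᶠ r in atTop, perimeter n R r ≤ perimeter n p r + e r) :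
    limitRatio n R ≤ limitRatio n p := by
  have hratio : perimVolRatio n R ≤ᶠ[atTop] perimVolRatio n p + fun r => e r / ballVolume n r := by
    filter_upwards [h] with r hr
    exact (ENNReal.div_le_div_right hr _).trans_eq ENNReal.add_div
  calc limitRatio n R ≤ limsup (perimVolRatio n p + fun r => e r / ballVolume n r) atTop :=
        limsup_le_limsup hratio
    _ = limitRatio n p := ENNReal.limsup_add_of_right_tendsto_zero he _

theorem tendsto_rpow_div_ballVolume {d : ℝ} (hd : d < n) :
    Tendsto (fun r => ENNReal.ofReal r ^ d / ballVolume n r) atTop (𝓝 0) :=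
  tendsto_rpow_div_addHaar_closedBall_atTop _ _ (by simpa using hd)

theorem tendsto_ballVolume_atTop (hn : n ≠ 0) : Tendsto (ballVolume n) atTop (𝓝 ∞) := by
  rw [← tendsto_inv_iff, ENNReal.inv_top]
  simpa using tendsto_rpow_div_ballVolume (n := n) (d := 0) (by positivity)

theorem tendsto_hausdorffMeasure_sphere_div_ballVolume (hn : n ≠ 0) :
    Tendsto (fun r => μH[(n : ℝ) - 1] (sphere (0 : EuclideanSpace ℝ (Fin n)) r) / ballVolume n r)
      atTop (𝓝 0) := by
  have : NeZero n := ⟨hn⟩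
  have hn1 : (0 : ℝ) ≤ n - 1 := sub_nonneg.2 (mod_cast Nat.one_le_iff_ne_zero.2 hn)
  have hunit : μH[(n : ℝ) - 1] (sphere (0 : EuclideanSpace ℝ (Fin n)) 1) ≠ ∞ := by
    simpa using (hausdorffMeasure_unitSphere_lt_top (E := EuclideanSpace ℝ (Fin n))).ne
  have hlim := ENNReal.Tendsto.mul_const (tendsto_rpow_div_ballVolume (sub_one_lt (n : ℝ)))
    (.inr hunit)
  rw [zero_mul] at hlim
  refine tendsto_of_tendsto_of_tendsto_of_le_of_le' tendsto_const_nhds hlim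
    (.of_forall fun _ => zero_le) ?_
  filter_upwards [eventually_ge_atTop 0] with r hr
  rw [← ENNReal.mul_div_right_comm]
  gcongr
  exact hausdorffMeasure_sphere_le hn1 0 hr

end Perimeter

/-- A decomposition of `ℝⁿ` into countably many bounded measurable regions of volume at most one.
Regions may be empty. -/
structure IsBoundedSubunitPartition (n : ℕ) (p : ℕ → Set (EuclideanSpace ℝ (Fin n))) : Prop where
  pairwise_disjoint : Pairwise (Function.onFun Disjoint p)
  measurableSet (j : ℕ) : MeasurableSet (p j)
  volume_le_one (j : ℕ) : volume (p j) ≤ 1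
  iUnion_eq_univ : ⋃ j, p j = univ
  isBounded (j : ℕ) : Bornology.IsBounded (p j)

section Shell

variable {E : Type*} [SeminormedAddCommGroup E] {ρ : ℕ → ℝ}

/-- The shell of vectors whose norm lies between the `k`-th radius (included) and the `(k + 1)`-st
radius (excluded). -/
def shell (ρ : ℕ → ℝ) (k : ℕ) : Set E :=
  {x | ‖x‖ ∈ Ico (ρ k) (ρ (k + 1))}

theorem pairwise_disjoint_shell (hρ : Monotone ρ) :
    Pairwise (Function.onFun Disjoint (shell (E := E) ρ)) := fun _ _ h =>
  (hρ.pairwise_disjoint_on_Ico_succ h).preimage norm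

theorem iUnion_Ico_succ_eq_Ici (hρ : Monotone ρ) (hρ_top : Tendsto ρ atTop atTop) :
    ⋃ k, Ico (ρ k) (ρ (k + 1)) = Ici (ρ 0) :=
  iUnion_Ico_map_succ_eq_Ici (fun _ => hρ bot_le) (not_bddAbove_of_tendsto_atTop hρ_top)

theorem iUnion_shell (hρ : Monotone ρ) (hρ0 : ρ 0 = 0) (hρ_top : Tendsto ρ atTop atTop) :
    ⋃ k, shell (E := E) ρ k = univ := by
  refine preimage_iUnion.symm.trans ?_
  rw [iUnion_Ico_succ_eq_Ici hρ hρ_top, hρ0]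
  exact eq_univ_of_forall norm_nonneg

theorem measurableSet_shell [MeasurableSpace E] [OpensMeasurableSpace E] (k : ℕ) :
    MeasurableSet (shell (E := E) ρ k) :=
  measurableSet_Ico.preimage continuous_norm.measurable

theorem isBounded_shell (k : ℕ) : Bornology.IsBounded (shell (E := E) ρ k) :=
  (isBounded_ball (x := (0 : E)) (r := ρ (k + 1))).subset fun _ hx => mem_ball_zero_iff.2 hx.2

/-- The family that coincides with `S k` on the `k`-th shell: its members are the intersections
`S k i ∩ shell ρ k`, where `(k, i)` is enumerated by the pairing function. -/
def glue (ρ : ℕ → ℝ) (S : ℕ → ℕ → Set E) (j : ℕ) : Set E :=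
  S j.unpair.1 j.unpair.2 ∩ shell ρ j.unpair.1

theorem pairwise_disjoint_glue {S : ℕ → ℕ → Set E} (hρ : Monotone ρ)
    (hS : ∀ k, Pairwise (Function.onFun Disjoint (S k))) :
    Pairwise (Function.onFun Disjoint (glue ρ S)) := by
  intro i j hij
  by_cases hshell : i.unpair.1 = j.unpair.1
  · have hindex : i.unpair.2 ≠ j.unpair.2 := fun h =>
      hij (Nat.pairEquiv.symm.injective (Prod.ext hshell h))
    have := hS i.unpair.1 hindex
    exact this.mono inter_subset_left (hshell ▸ inter_subset_left)
  · exact (pairwise_disjoint_shell hρ hshell).mono inter_subset_right inter_subset_right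

theorem iUnion_glue {S : ℕ → ℕ → Set E} (hρ : ⋃ k, shell (E := E) ρ k = univ)
    (hS : ∀ k, ⋃ i, S k i = univ) : ⋃ j, glue ρ S j = univ := by
  refine eq_univ_of_forall fun x => ?_
  obtain ⟨k, hk⟩ := iUnion_eq_univ_iff.1 hρ x
  obtain ⟨i, hi⟩ := iUnion_eq_univ_iff.1 (hS k) x
  exact mem_iUnion.2 ⟨Nat.pair k i, by simpa [glue] using ⟨hi, hk⟩⟩

theorem frontier_inter_eq_of_inter_eq {X : Type*} [TopologicalSpace X] {s t o : Set X}
    (ho : IsOpen o) (h : s ∩ o = t ∩ o) : frontier s ∩ o = frontier t ∩ o := by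
  rw [← frontier_inter_open_inter ho, h, frontier_inter_open_inter ho]

theorem iUnion_frontier_glue_inter_subset (hρ : Monotone ρ) (S : ℕ → ℕ → Set E) (k : ℕ) :
    (⋃ j, frontier (glue ρ S j)) ∩ {x | ‖x‖ ∈ Ioo (ρ k) (ρ (k + 1))} ⊆ ⋃ i, frontier (S k i) := by
  set o : Set E := {x | ‖x‖ ∈ Ioo (ρ k) (ρ (k + 1))}
  have ho : IsOpen o := isOpen_Ioo.preimage continuous_norm
  have hshell : o ⊆ shell ρ k := fun x hx => Ioo_subset_Ico_self hx
  rw [iUnion_inter]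
  refine iUnion_subset fun j => ?_
  obtain hj | hj := eq_or_ne j.unpair.1 k
  · have hagree : glue ρ S j ∩ o = S k j.unpair.2 ∩ o := by
      rw [glue, hj, inter_assoc, inter_eq_right.2 hshell]
    rw [frontier_inter_eq_of_inter_eq ho hagree]
    exact inter_subset_left.trans (subset_iUnion (fun i => frontier (S k i)) _)
  · have hempty : glue ρ S j ∩ o = ∅ ∩ o := by
      rw [empty_inter, ← disjoint_iff_inter_eq_empty]
      exact (pairwise_disjoint_shell hρ hj).mono inter_subset_right hshell
    rw [frontier_inter_eq_of_inter_eq ho hempty]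
    simp

end Shell

section Glue

variable {n : ℕ} {ρ : ℕ → ℝ} {S : ℕ → ℕ → Set (EuclideanSpace ℝ (Fin n))}

theorem isBoundedSubunitPartition_glue (hρ : Monotone ρ) (hρ0 : ρ 0 = 0)
    (hρ_top : Tendsto ρ atTop atTop) (hS : ∀ k, IsUnitPartition n (S k)) :
    IsBoundedSubunitPartition n (glue ρ S) where
  pairwise_disjoint := pairwise_disjoint_glue hρ fun k => (hS k).1
  measurableSet _ := ((hS _).2.1 _).inter (measurableSet_shell _)
  volume_le_one _ := (measure_mono inter_subset_left).trans_eq ((hS _).2.2.1 _)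
  iUnion_eq_univ := iUnion_glue (iUnion_shell hρ hρ0 hρ_top) fun k => (hS k).2.2.2
  isBounded _ := (isBounded_shell _).subset inter_subset_right

theorem perimeter_glue_succ_le (hρ : Monotone ρ) (k : ℕ) :
    perimeter n (glue ρ S) (ρ (k + 1)) ≤ perimeter n (glue ρ S) (ρ k) +
      perimeter n (S k) (ρ (k + 1)) +
        μH[(n : ℝ) - 1] (sphere (0 : EuclideanSpace ℝ (Fin n)) (ρ (k + 1))) := by
  refine (measure_mono (t := _ ∪ _ ∪ _) ?_).trans
    ((measure_union_le _ _).trans (add_le_add_left (measure_union_le _ _) _))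
  rintro x ⟨hx, hxr⟩
  obtain hlt | heq := (mem_closedBall_zero_iff.1 hxr).lt_or_eq
  · obtain hle | hgt := le_or_gt ‖x‖ (ρ k)
    · exact .inl (.inl ⟨hx, mem_closedBall_zero_iff.2 hle⟩)
    · exact .inl (.inr ⟨iUnion_frontier_glue_inter_subset hρ S k ⟨hx, hgt, hlt⟩, hxr⟩)
  · exact .inr (mem_sphere_zero_iff_norm.2 heq)

theorem perimeter_add_perimeter_glue_le (hρ : Monotone ρ) {k : ℕ} {r : ℝ} (hkr : ρ k ≤ r)
    (hrk : r < ρ (k + 1)) :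
    perimeter n (S k) (ρ k) + perimeter n (glue ρ S) r ≤
      perimeter n (glue ρ S) (ρ k) + perimeter n (S k) r := by
  set F := ⋃ i, frontier (S k i)
  have hsplit : perimeter n (S k) (ρ k) +
      μH[(n : ℝ) - 1] ((F ∩ closedBall 0 r) \ closedBall 0 (ρ k)) = perimeter n (S k) r := by
    rw [perimeter, perimeter, ← measure_inter_add_sdiff (F ∩ closedBall 0 r)
      (measurableSet_closedBall (x := 0) (ε := ρ k)), inter_assoc,
      inter_eq_right.2 (closedBall_subset_closedBall hkr)]
  have hcover : (⋃ j, frontier (glue ρ S j)) ∩ closedBall 0 r ⊆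
      (⋃ j, frontier (glue ρ S j)) ∩ closedBall 0 (ρ k) ∪
        (F ∩ closedBall 0 r) \ closedBall 0 (ρ k) := by
    rintro x ⟨hx, hxr⟩
    by_cases hxk : x ∈ closedBall 0 (ρ k)
    · exact .inl ⟨hx, hxk⟩
    · have hk : ρ k < ‖x‖ := by simpa using hxk
      have hk' : ‖x‖ < ρ (k + 1) := (mem_closedBall_zero_iff.1 hxr).trans_lt hrk
      exact .inr ⟨⟨iUnion_frontier_glue_inter_subset hρ S k ⟨hx, hk, hk'⟩, hxr⟩, hxk⟩
  rw [← hsplit, add_left_comm]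
  gcongr
  exact (measure_mono hcover).trans (measure_union_le _ _)

end Glue

section GluingRadii

variable {n : ℕ} {L : ℝ≥0∞} {ε : ℕ → ℝ≥0∞} {ρ : ℕ → ℝ}
  {S : ℕ → ℕ → Set (EuclideanSpace ℝ (Fin n))}

/-- The radii between which the families `S k` are glued in order to obtain a family of limiting
ratio at most `L`. At radius `ρ (k + 1)`, where `S k` gives way to `S (k + 1)`, all earlier
contributions and the interface sphere are negligible, both families have ratio almost at most `L`
from there on, and the ratio of `S (k + 1)` is almost at least `L`. -/
structure IsGluingRadii (n : ℕ) (L : ℝ≥0∞) (ε : ℕ → ℝ≥0∞)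
    (S : ℕ → ℕ → Set (EuclideanSpace ℝ (Fin n))) (ρ : ℕ → ℝ) : Prop where
  zero : ρ 0 = 0
  add_one_le (k : ℕ) : ρ k + 1 ≤ ρ (k + 1)
  ballVolume_le (k : ℕ) : (L + 3) * ballVolume n (ρ k) ≤ ε k * ballVolume n (ρ (k + 1))
  hausdorffMeasure_sphere_le (k : ℕ) :
    μH[(n : ℝ) - 1] (sphere (0 : EuclideanSpace ℝ (Fin n)) (ρ (k + 1))) ≤
      ε k * ballVolume n (ρ (k + 1))
  perimeter_le (k : ℕ) (r : ℝ) (hr : ρ (k + 1) ≤ r) :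
    perimeter n (S k) r ≤ (L + ε k) * ballVolume n r
  perimeter_succ_le (k : ℕ) (r : ℝ) (hr : ρ (k + 1) ≤ r) :
    perimeter n (S (k + 1)) r ≤ (L + ε k) * ballVolume n r
  le_perimeter_succ (k : ℕ) :
    L * ballVolume n (ρ (k + 1)) ≤
      perimeter n (S (k + 1)) (ρ (k + 1)) + ε k * ballVolume n (ρ (k + 1))

theorem exists_seq_rel_succ {α : Type*} {P : ℕ → α → α → Prop} (a : α)
    (h : ∀ k x, ∃ y, P k x y) : ∃ u : ℕ → α, u 0 = a ∧ ∀ k, P k (u k) (u (k + 1)) := by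
  choose next hnext using h
  exact ⟨fun k => Nat.rec a next k, rfl, fun k => hnext k _⟩

theorem exists_isGluingRadii (hn : n ≠ 0) (hL : L ≠ ∞) (hε0 : ∀ k, ε k ≠ 0) (hε : Antitone ε)
    (hS : ∀ k, L ≤ limitRatio n (S k)) (hS' : ∀ k, limitRatio n (S k) < L + ε k) :
    ∃ ρ, IsGluingRadii n L ε S ρ := by
  have upper (k : ℕ) : ∀ᶠ s in atTop, ∀ r ≥ s,
      perimeter n (S k) r ≤ (L + ε k) * ballVolume n r :=
    eventually_forall_ge_atTop.2 (eventually_perimeter_le_of_limitRatio_lt (hS' k))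
  have upper_succ (k : ℕ) : ∀ᶠ s in atTop, ∀ r ≥ s,
      perimeter n (S (k + 1)) r ≤ (L + ε k) * ballVolume n r :=
    eventually_forall_ge_atTop.2 <| eventually_perimeter_le_of_limitRatio_lt <|
      (hS' (k + 1)).trans_le (by gcongr; exact hε k.le_succ)
  have sphere_small (k : ℕ) : ∀ᶠ r in atTop,
      μH[(n : ℝ) - 1] (sphere (0 : EuclideanSpace ℝ (Fin n)) r) ≤ ε k * ballVolume n r := by
    filter_upwards [(tendsto_hausdorffMeasure_sphere_div_ballVolume hn).eventually_le_const
      (pos_iff_ne_zero.2 (hε0 k)), eventually_gt_atTop 0] with r hr hr0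
    exact (ENNReal.div_le_iff (ballVolume_ne_zero hr0) (ballVolume_ne_top r)).1 hr
  have volume_large (k : ℕ) (s : ℝ) : ∀ᶠ r in atTop,
      (L + 3) * ballVolume n s ≤ ε k * ballVolume n r := by
    have hlim := ENNReal.Tendsto.const_mul (tendsto_ballVolume_atTop hn)
      (.inl ENNReal.top_ne_zero) (a := ε k)
    rw [ENNReal.mul_top (hε0 k)] at hlim
    exact hlim.eventually_const_le (by have := ballVolume_ne_top (n := n) s; finiteness)
  obtain ⟨ρ, hρ0, hρ⟩ := exists_seq_rel_succ (0 : ℝ) fun k s =>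
    ((frequently_le_perimeter_add hL (hS (k + 1)) (hε0 k)).and_eventually
      ((eventually_ge_atTop (s + 1)).and ((volume_large k s).and
        ((sphere_small k).and ((upper k).and (upper_succ k)))))).exists
  exact ⟨ρ, hρ0, fun k => (hρ k).2.1, fun k => (hρ k).2.2.1, fun k => (hρ k).2.2.2.1,
    fun k => (hρ k).2.2.2.2.1, fun k => (hρ k).2.2.2.2.2, fun k => (hρ k).1⟩

namespace IsGluingRadii

variable (h : IsGluingRadii n L ε S ρ)
include h

theorem monotone : Monotone ρ :=
  monotone_nat_of_le_succ fun k => by linarith [h.add_one_le k]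

theorem tendsto_atTop : Tendsto ρ atTop atTop := by
  refine tendsto_atTop_mono (fun k => ?_) tendsto_natCast_atTop_atTop
  induction k with
  | zero => simp [h.zero]
  | succ k ih => push_cast; linarith [h.add_one_le k]

theorem perimeter_glue_succ_le_of_le {k : ℕ}
    (hk : perimeter n (glue ρ S) (ρ k) ≤ (L + 3) * ballVolume n (ρ k)) :
    perimeter n (glue ρ S) (ρ (k + 1)) ≤ (L + 3 * ε k) * ballVolume n (ρ (k + 1)) :=
  let V := ballVolume n (ρ (k + 1))
  calc perimeter n (glue ρ S) (ρ (k + 1))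
    _ ≤ ε k * V + (L + ε k) * V + ε k * V := by
      refine (perimeter_glue_succ_le h.monotone k).trans ?_
      gcongr
      exacts [hk.trans (h.ballVolume_le k), h.perimeter_le k _ le_rfl,
        h.hausdorffMeasure_sphere_le k]
    _ = (L + 3 * ε k) * V := by ring

theorem perimeter_glue_le (hn : 1 < n) (hε : ∀ k, ε k ≤ 1) (k : ℕ) :
    perimeter n (glue ρ S) (ρ k) ≤ (L + 3) * ballVolume n (ρ k) := by
  induction k with
  | zero =>
    have hn1 : (0 : ℝ) < n - 1 := sub_pos.2 (mod_cast hn)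
    have := Measure.nullSingletonClass_hausdorff (EuclideanSpace ℝ (Fin n)) hn1
    have hzero : perimeter n (glue ρ S) (ρ 0) = 0 := by
      rw [perimeter, h.zero, closedBall_zero]
      exact measure_mono_null inter_subset_right (measure_singleton 0)
    simp [hzero]
  | succ k ih =>
    refine (h.perimeter_glue_succ_le_of_le ih).trans ?_
    gcongr
    exact mul_le_of_le_one_right' (hε k)

theorem perimeter_glue_le_of_mem_Ico (hn : 1 < n) (hL : L ≠ ∞) (hε : ∀ k, ε k ≤ 1)
    {k : ℕ} {r : ℝ} (hr : r ∈ Ico (ρ (k + 1)) (ρ (k + 2))) :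
    perimeter n (glue ρ S) r ≤ (L + 5 * ε k) * ballVolume n r := by
  set V := ballVolume n (ρ (k + 1))
  set W := ballVolume n r
  have hVW : V ≤ W := monotone_ballVolume hr.1
  have hLV : L * V ≠ ∞ := ENNReal.mul_ne_top hL (ballVolume_ne_top _)
  refine (ENNReal.add_le_add_iff_left hLV).1 ?_
  calc L * V + perimeter n (glue ρ S) r
    _ ≤ perimeter n (S (k + 1)) (ρ (k + 1)) + ε k * V + perimeter n (glue ρ S) r := by
      gcongr
      exact h.le_perimeter_succ k
    _ = perimeter n (S (k + 1)) (ρ (k + 1)) + perimeter n (glue ρ S) r + ε k * V := by ring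
    _ ≤ perimeter n (glue ρ S) (ρ (k + 1)) + perimeter n (S (k + 1)) r + ε k * V := by
      gcongr ?_ + _
      exact perimeter_add_perimeter_glue_le h.monotone hr.1 hr.2
    _ ≤ (L + 3 * ε k) * V + (L + ε k) * W + ε k * V := by
      gcongr
      exacts [h.perimeter_glue_succ_le_of_le (h.perimeter_glue_le hn hε k),
        h.perimeter_succ_le k r hr.1]
    _ = L * V + (4 * ε k * V + (L + ε k) * W) := by ring
    _ ≤ L * V + (4 * ε k * W + (L + ε k) * W) := by gcongr
    _ = L * V + (L + 5 * ε k) * W := by ring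

theorem limitRatio_glue_le (hn : 1 < n) (hL : L ≠ ∞) (hε : ∀ k, ε k ≤ 1)
    (hε_anti : Antitone ε) (hε_lim : Tendsto ε atTop (𝓝 0)) : limitRatio n (glue ρ S) ≤ L := by
  have hlim : Tendsto (fun k => L + 5 * ε k) atTop (𝓝 L) := by
    simpa using tendsto_const_nhds.add (ENNReal.Tendsto.const_mul hε_lim (.inr (by simp)))
  refine ge_of_tendsto' hlim fun K => limitRatio_le_of_eventually_perimeter_le ?_
  filter_upwards [eventually_ge_atTop (ρ (K + 1))] with r hr
  obtain ⟨k, hk⟩ := mem_iUnion.1 <| (iUnion_Ico_succ_eq_Ici h.monotone h.tendsto_atTop).ge <|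
    (h.monotone (Nat.zero_le (K + 1))).trans hr
  have hKk : K < k := Nat.lt_of_succ_lt_succ (h.monotone.reflect_lt (hr.trans_lt hk.2))
  obtain ⟨k, rfl⟩ := Nat.exists_eq_add_one.2 ((Nat.zero_le K).trans_lt hKk)
  refine (h.perimeter_glue_le_of_mem_Ico hn hL hε hk).trans ?_
  gcongr
  exact hε_anti (Nat.le_of_lt_succ hKk)

end IsGluingRadii

theorem exists_isBoundedSubunitPartition_limitRatio_le (hn : 1 < n) (hL : L ≠ ∞)
    (h : ∀ ε ≠ 0, ∃ S, IsUnitPartition n S ∧ L ≤ limitRatio n S ∧ limitRatio n S < L + ε) :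
    ∃ p, IsBoundedSubunitPartition n p ∧ limitRatio n p ≤ L := by
  obtain ⟨ε, hε_anti, hε, hε_lim⟩ := exists_seq_strictAnti_tendsto' (zero_lt_one' ℝ≥0∞)
  choose S hS hle hlt using fun k => h (ε k) (hε k).1.ne'
  obtain ⟨ρ, hρ⟩ := exists_isGluingRadii (Nat.ne_zero_of_lt hn) hL (fun k => (hε k).1.ne')
    hε_anti.antitone hle hlt
  exact ⟨glue ρ S, isBoundedSubunitPartition_glue hρ.monotone hρ.zero hρ.tendsto_atTop hS,
    hρ.limitRatio_glue_le hn hL (fun k => (hε k).2.le) hε_anti.antitone hε_lim⟩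

end GluingRadii

section Refill

/-- The regions obtained from `p` by removing all the sets `b j` and then adding `b i` to the
`i`-th region. -/
def refill {α : Type*} (p b : ℕ → Set α) (i : ℕ) : Set α :=
  (p i \ ⋃ j, b j) ∪ b i

section Set

variable {α : Type*} {p b : ℕ → Set α}

theorem disjoint_sdiff_iUnion (s : Set α) (j : ℕ) : Disjoint (s \ ⋃ k, b k) (b j) :=
  disjoint_sdiff_left.mono_right (subset_iUnion b j)

theorem pairwise_disjoint_refill (hp : Pairwise (Function.onFun Disjoint p))
    (hb : Pairwise (Function.onFun Disjoint b)) :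
    Pairwise (Function.onFun Disjoint (refill p b)) := fun _ _ hij =>
  (((hp hij).mono sdiff_subset sdiff_subset).union_right (disjoint_sdiff_iUnion _ _)).union_left
    ((disjoint_sdiff_iUnion _ _).symm.union_right (hb hij))

theorem iUnion_refill (hp : ⋃ i, p i = univ) : ⋃ i, refill p b i = univ := by
  simp only [refill, iUnion_union_distrib, ← iUnion_sdiff, hp, sdiff_union_self, univ_union]

theorem measure_refill [MeasurableSpace α] (μ : Measure α) (hb : ∀ i, MeasurableSet (b i))
    (i : ℕ) : μ (refill p b i) = μ (p i \ ⋃ j, b j) + μ (b i) :=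
  measure_union (disjoint_sdiff_iUnion _ _) (hb i)

theorem frontier_iUnion_subset_of_locallyFinite [TopologicalSpace α] (hb : LocallyFinite b) :
    frontier (⋃ j, b j) ⊆ ⋃ j, frontier (b j) := by
  rw [frontier, hb.closure_iUnion, iUnion_sdiff]
  exact iUnion_mono fun j => sdiff_subset_sdiff_right (interior_mono (subset_iUnion b j))

theorem iUnion_frontier_refill_subset [TopologicalSpace α] (hb : LocallyFinite b) :
    ⋃ i, frontier (refill p b i) ⊆ (⋃ i, frontier (p i)) ∪ ⋃ j, frontier (b j) := by
  refine iUnion_subset fun i => ?_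
  have hdiff : frontier (p i \ ⋃ j, b j) ⊆ frontier (p i) ∪ frontier (⋃ j, b j) := by
    rw [sdiff_eq, ← frontier_compl (⋃ j, b j)]
    exact (frontier_inter_subset _ _).trans
      (union_subset_union inter_subset_left inter_subset_right)
  calc frontier (refill p b i) ⊆ frontier (p i \ ⋃ j, b j) ∪ frontier (b i) :=
        (frontier_union_subset _ _).trans
          (union_subset_union inter_subset_left inter_subset_right)
    _ ⊆ (frontier (p i) ∪ frontier (⋃ j, b j)) ∪ frontier (b i) := by gcongr
    _ ⊆ (⋃ i, frontier (p i)) ∪ ⋃ j, frontier (b j) :=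
        union_subset
          (union_subset_union (subset_iUnion (fun i => frontier (p i)) i)
            (frontier_iUnion_subset_of_locallyFinite hb))
          ((subset_iUnion (fun j => frontier (b j)) i).trans subset_union_right)

end Set

section Sparse

variable {E : Type*} [SeminormedAddCommGroup E] {s : ℕ → Set E}

theorem locallyFinite_of_forall_le_norm (hs : ∀ j, ∀ x ∈ s j, j ≤ ‖x‖) : LocallyFinite s := by
  refine fun x => ⟨ball x 1, ball_mem_nhds x one_pos, (finite_Iic ⌊‖x‖ + 1⌋₊).subset ?_⟩
  rintro j ⟨y, hy, hyx⟩
  have hyx' : ‖y - x‖ < 1 := mem_ball_iff_norm.1 hyx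
  exact Nat.le_floor (by linarith [hs j y hy, norm_sub_norm_le y x])

theorem measure_iUnion_inter_closedBall_le [MeasurableSpace E] (μ : Measure E) {K : ℝ≥0∞}
    (hs : ∀ j, ∀ x ∈ s j, j ≤ ‖x‖) (hK : ∀ j, μ (s j) ≤ K) (r : ℝ) :
    μ ((⋃ j, s j) ∩ closedBall 0 r) ≤ (⌊r⌋₊ + 1 : ℕ) * K := by
  have hcover : (⋃ j, s j) ∩ closedBall 0 r ⊆ ⋃ j ∈ Finset.range (⌊r⌋₊ + 1), s j := by
    rintro x ⟨hx, hxr⟩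
    obtain ⟨j, hj⟩ := mem_iUnion.1 hx
    have hjr : j ≤ r := (hs j x hj).trans (mem_closedBall_zero_iff.1 hxr)
    exact mem_biUnion (Finset.mem_range_succ_iff.2 (Nat.le_floor hjr)) hj
  calc μ ((⋃ j, s j) ∩ closedBall 0 r) ≤ ∑ j ∈ Finset.range (⌊r⌋₊ + 1), μ (s j) :=
        (measure_mono hcover).trans (measure_biUnion_finset_le _ _)
    _ ≤ (⌊r⌋₊ + 1 : ℕ) * K := by
        simpa using Finset.sum_le_card_nsmul (Finset.range (⌊r⌋₊ + 1)) _ K fun j _ => hK j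

end Sparse

theorem exists_sparse_centers {E : Type*} [NormedAddCommGroup E] [NormedSpace ℝ E] [Nontrivial E]
    {p : ℕ → Set E} (hp : ∀ i, Bornology.IsBounded (p i)) {ρ : ℝ} (hρ : 0 ≤ ρ) :
    ∃ c : ℕ → E, (∀ j, j + ρ ≤ ‖c j‖) ∧ Pairwise (Function.onFun Disjoint fun j => ball (c j) ρ) ∧
      ∀ i j, i ≤ j → Disjoint (p i) (ball (c j) ρ) := by
  obtain ⟨e, he⟩ := exists_norm_eq E zero_le_one
  choose B hB hpB using fun i => (hp i).exists_pos_norm_le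
  set M := partialSups B
  have hM (j : ℕ) : 0 ≤ M j := (hB j).le.trans (le_partialSups B j)
  set s : ℕ → ℝ := fun j => M j + (j + 1) * (2 * ρ + 1)
  have hs_large (j : ℕ) : M j + j + ρ ≤ s j := by
    linarith [mul_nonneg (Nat.cast_nonneg (α := ℝ) j) hρ]
  have hs_add {i j : ℕ} (hij : i < j) : s i + (2 * ρ + 1) ≤ s j := by
    have hcast : (i + 1 + 1 : ℝ) ≤ j + 1 := by gcongr; exact_mod_cast hij
    calc s i + (2 * ρ + 1) = M i + (i + 1 + 1) * (2 * ρ + 1) := by ring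
      _ ≤ M j + (j + 1) * (2 * ρ + 1) := by
        gcongr ?_ + ?_ * _
        exact M.monotone hij.le
  have hc_norm (j : ℕ) : ‖s j • e‖ = s j := by
    rw [norm_smul, he, mul_one, Real.norm_of_nonneg (by linarith [hs_large j, hM j])]
  refine ⟨fun j => s j • e, fun j => ?_, (pairwise_disjoint_on _).2 fun i j hij => ?_,
    fun i j hij => ?_⟩
  · linarith [hs_large j, hM j, hc_norm j]
  · apply ball_disjoint_ball
    rw [dist_comm, dist_eq_norm, ← sub_smul, norm_smul, he, mul_one]
    exact le_trans (by linarith [hs_add hij]) (le_abs_self _)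
  · refine Set.disjoint_left.2 fun x hx hxc => ?_
    have hxB : ‖x‖ ≤ M j := (hpB i x hx).trans (le_partialSups_of_le B hij)
    have hxc' : ‖s j • e - x‖ < ρ := mem_ball_iff_norm'.1 hxc
    linarith [hs_large j, hc_norm j, norm_sub_norm_le (s j • e) x, Nat.cast_nonneg (α := ℝ) j]

theorem exists_filling_radii {X : Type*} [PseudoMetricSpace X] [MeasurableSpace X]
    (μ : Measure X) {w : ℝ≥0∞} {ρ : ℝ}
    (hρ : ∀ v ≤ w, ∃ t, 0 ≤ t ∧ t ≤ ρ ∧ ∀ x, μ (ball x t) = v) (p : ℕ → Set X) (c : ℕ → X) :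
    ∃ t : ℕ → ℝ, ∀ i, 0 ≤ t i ∧ t i ≤ ρ ∧
      μ (ball (c i) (t i)) = w - μ (p i \ ⋃ j < i, ball (c j) (t j)) := by
  have hnext (i : ℕ) (W : Set X) : ∃ W', ∃ t, 0 ≤ t ∧ t ≤ ρ ∧ W' = W ∪ ball (c i) t ∧
      μ (ball (c i) t) = w - μ (p i \ W) := by
    obtain ⟨t, ht0, htρ, ht⟩ := hρ (w - μ (p i \ W)) tsub_le_self
    exact ⟨_, t, ht0, htρ, rfl, ht (c i)⟩
  obtain ⟨W, hW0, hW⟩ := exists_seq_rel_succ ∅ hnext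
  choose t ht0 htρ hW_succ ht using hW
  have hW_eq (i : ℕ) : W i = ⋃ j < i, ball (c j) (t j) := by
    induction i with
    | zero => simp [hW0]
    | succ i ih => rw [hW_succ, biUnion_lt_succ, ih]
  exact ⟨t, fun i => ⟨ht0 i, htρ i, hW_eq i ▸ ht i⟩⟩

theorem exists_filling_balls {E : Type*} [NormedAddCommGroup E] [NormedSpace ℝ E]
    [FiniteDimensional ℝ E] [Nontrivial E] [MeasurableSpace E] [BorelSpace E] (μ : Measure E)
    [μ.IsAddHaarMeasure] {p : ℕ → Set E} (hp : ∀ i, Bornology.IsBounded (p i)) {w : ℝ≥0∞}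
    (hw : w ≠ ∞) :
    ∃ (c : ℕ → E) (t : ℕ → ℝ) (ρ : ℝ), (∀ j, 0 ≤ t j ∧ t j ≤ ρ) ∧
      Pairwise (Function.onFun Disjoint fun j => ball (c j) (t j)) ∧
      (∀ j, ∀ x ∈ closedBall (c j) (t j), j ≤ ‖x‖) ∧
      ∀ i, μ (ball (c i) (t i)) = w - μ (p i \ ⋃ j, ball (c j) (t j)) := by
  obtain ⟨ρ, hρ⟩ := exists_le_forall_addHaar_ball_eq μ hw
  obtain ⟨t₀, ht₀, ht₀ρ, -⟩ := hρ 0 zero_le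
  obtain ⟨c, hc_far, hc_disj, hpc⟩ := exists_sparse_centers hp (ht₀.trans ht₀ρ)
  obtain ⟨t, ht⟩ := exists_filling_radii μ hρ p c
  have hsub (j : ℕ) : ball (c j) (t j) ⊆ ball (c j) ρ := ball_subset_ball (ht j).2.1
  have hdiff (i : ℕ) : p i \ ⋃ j < i, ball (c j) (t j) = p i \ ⋃ j, ball (c j) (t j) := by
    refine Subset.antisymm (fun x hx => ⟨hx.1, fun hxU => ?_⟩)
      (sdiff_subset_sdiff_right (iUnion₂_subset_iUnion _ _))
    obtain ⟨j, hj⟩ := mem_iUnion.1 hxU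
    obtain hji | hij := lt_or_ge j i
    · exact hx.2 (mem_biUnion hji hj)
    · exact (hpc i j hij).notMem_of_mem_left hx.1 (hsub j hj)
  refine ⟨c, t, ρ, fun j => ⟨(ht j).1, (ht j).2.1⟩,
    hc_disj.mono fun i j h => h.mono (hsub i) (hsub j), fun j x hx => ?_,
    fun i => hdiff i ▸ (ht i).2.2⟩
  have hxc : ‖c j - x‖ ≤ t j := by rwa [← mem_closedBall_iff_norm']
  linarith [hc_far j, norm_sub_norm_le (c j) x, (ht j).2.1]

variable {n : ℕ}

theorem isUnitPartition_refill {p b : ℕ → Set (EuclideanSpace ℝ (Fin n))}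
    (hp : IsBoundedSubunitPartition n p) (hb : Pairwise (Function.onFun Disjoint b))
    (hb_meas : ∀ i, MeasurableSet (b i)) (hpb : ∀ i, volume (b i) = 1 - volume (p i \ ⋃ j, b j)) :
    IsUnitPartition n (refill p b) := by
  refine ⟨pairwise_disjoint_refill hp.pairwise_disjoint hb, fun i => ?_, fun i => ?_,
    iUnion_refill hp.iUnion_eq_univ⟩
  · exact ((hp.measurableSet i).diff (.iUnion hb_meas)).union (hb_meas i)
  · rw [measure_refill _ hb_meas, hpb]
    exact add_tsub_cancel_of_le ((measure_mono sdiff_subset).trans (hp.volume_le_one i))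

theorem tendsto_perimeter_ball_div_ballVolume (hn : 1 < n) {c : ℕ → EuclideanSpace ℝ (Fin n)}
    {t : ℕ → ℝ} {ρ : ℝ} (ht : ∀ j, 0 ≤ t j ∧ t j ≤ ρ)
    (hc : ∀ j, ∀ x ∈ closedBall (c j) (t j), j ≤ ‖x‖) :
    Tendsto (fun r => perimeter n (fun j => ball (c j) (t j)) r / ballVolume n r) atTop (𝓝 0) := by
  have : NeZero n := ⟨Nat.ne_zero_of_lt hn⟩
  have hn1 : (0 : ℝ) ≤ n - 1 := sub_nonneg.2 (mod_cast hn.le)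
  set K := ENNReal.ofReal ρ ^ ((n : ℝ) - 1) *
    μH[(n : ℝ) - 1] (sphere (0 : EuclideanSpace ℝ (Fin n)) 1)
  have hK_top : K ≠ ∞ := by
    have := hausdorffMeasure_unitSphere_lt_top (E := EuclideanSpace ℝ (Fin n)) |>.ne
    rw [finrank_euclideanSpace_fin] at this
    finiteness
  have hK (j : ℕ) : μH[(n : ℝ) - 1] (frontier (ball (c j) (t j))) ≤ K := by
    refine (measure_mono frontier_ball_subset_sphere).trans
      ((hausdorffMeasure_sphere_le hn1 _ (ht j).1).trans ?_)
    exact mul_le_mul_left (ENNReal.rpow_le_rpow (ENNReal.ofReal_le_ofReal (ht j).2) hn1) _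
  have hlim := ENNReal.Tendsto.mul_const (tendsto_rpow_div_ballVolume (n := n) (d := 1)
    (mod_cast hn)) (.inr (ENNReal.mul_ne_top (ENNReal.ofNat_ne_top (n := 2)) hK_top))
  rw [zero_mul] at hlim
  refine tendsto_of_tendsto_of_tendsto_of_le_of_le' tendsto_const_nhds hlim
    (.of_forall fun _ => zero_le) ?_
  filter_upwards [eventually_ge_atTop 1] with r hr
  have hfloor : ((⌊r⌋₊ + 1 : ℕ) : ℝ≥0∞) ≤ ENNReal.ofReal r * 2 := by
    rw [← ENNReal.ofReal_natCast, ← ENNReal.ofReal_ofNat 2, ← ENNReal.ofReal_mul (by positivity)]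
    refine ENNReal.ofReal_le_ofReal ?_
    push_cast
    linarith [Nat.floor_le (zero_le_one.trans hr)]
  rw [← ENNReal.mul_div_right_comm, ENNReal.rpow_one, ← mul_assoc]
  gcongr
  refine (measure_iUnion_inter_closedBall_le _ (fun j x hx => ?_) hK r).trans (by gcongr)
  exact hc j x (sphere_subset_closedBall (frontier_ball_subset_sphere hx))

theorem exists_isUnitPartition_limitRatio_le (hn : 1 < n)
    {p : ℕ → Set (EuclideanSpace ℝ (Fin n))} (hp : IsBoundedSubunitPartition n p) :
    ∃ R, IsUnitPartition n R ∧ (∀ j, Bornology.IsBounded (R j)) ∧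
      limitRatio n R ≤ limitRatio n p := by
  have : NeZero n := ⟨Nat.ne_zero_of_lt hn⟩
  obtain ⟨c, t, ρ, ht, hdisj, hfar, hvol⟩ :=
    exists_filling_balls volume hp.isBounded ENNReal.one_ne_top
  set b : ℕ → Set (EuclideanSpace ℝ (Fin n)) := fun j => ball (c j) (t j)
  refine ⟨refill p b, isUnitPartition_refill hp hdisj (fun _ => measurableSet_ball) hvol,
    fun j => ((hp.isBounded j).subset sdiff_subset).union isBounded_ball,
    limitRatio_le_of_perimeter_le_add (tendsto_perimeter_ball_div_ballVolume hn ht hfar)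
      (.of_forall fun r => ?_)⟩
  have hfin : LocallyFinite b :=
    locallyFinite_of_forall_le_norm fun j x hx => hfar j x (ball_subset_closedBall hx)
  refine (measure_mono (inter_subset_inter_left _ (iUnion_frontier_refill_subset hfin))).trans ?_
  rw [union_inter_distrib_right]
  exact measure_union_le _ _

end Refill

theorem exists_isBoundedSubunitPartition (n : ℕ) [NeZero n] :
    ∃ p, IsBoundedSubunitPartition n p := by
  obtain ⟨_, h⟩ := exists_le_forall_addHaar_ball_eq
    (volume : Measure (EuclideanSpace ℝ (Fin n))) ENNReal.one_ne_top
  obtain ⟨t, -, -, ht⟩ := h 1 le_rfl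
  have ht0 : 0 < t := by
    by_contra! hle
    simpa [ball_eq_empty.2 hle] using ht 0
  set b : ℕ → Set (EuclideanSpace ℝ (Fin n)) := fun j => ball (TopologicalSpace.denseSeq _ j) t
  refine ⟨disjointed b, disjoint_disjointed b, .disjointed fun _ => measurableSet_ball,
    fun j => (measure_mono (disjointed_subset b j)).trans_eq (ht _), ?_,
    fun j => isBounded_ball.subset (disjointed_subset b j)⟩
  rw [iUnion_disjointed]
  refine iUnion_eq_univ_iff.2 fun x => ?_
  exact (TopologicalSpace.denseRange_denseSeq _).exists_dist_lt x ht0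

theorem exists_isBoundedSubunitPartition_limitRatio_le_iInf {n : ℕ} (hn : 1 < n) :
    ∃ p, IsBoundedSubunitPartition n p ∧
      limitRatio n p ≤ ⨅ (S) (_ : IsUnitPartition n S), limitRatio n S := by
  have : NeZero n := ⟨Nat.ne_zero_of_lt hn⟩
  set L := ⨅ (S) (_ : IsUnitPartition n S), limitRatio n S
  obtain hL | hL := eq_or_ne L ∞
  · obtain ⟨p, hp⟩ := exists_isBoundedSubunitPartition n
    exact ⟨p, hp, hL ▸ le_top⟩
  · refine exists_isBoundedSubunitPartition_limitRatio_le hn hL fun ε hε => ?_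
    have hlt : ⨅ (S) (_ : IsUnitPartition n S), limitRatio n S < L + ε :=
      ENNReal.lt_add_right hL hε
    obtain ⟨S, hS, hSL⟩ := by simpa only [iInf_lt_iff] using hlt
    exact ⟨S, hS, iInf₂_le S hS, hSL⟩

/-- There is a perimeter-minimizing partition of `ℝⁿ` into regions of unit volume
all of whose regions are bounded. -/
theorem exists_perimeter_minimizing_unit_partition_bounded (n : ℕ) (hn : 2 ≤ n) :
    ∃ R : ℕ → Set (EuclideanSpace ℝ (Fin n)), IsUnitPartition n R ∧
      (∀ j, Bornology.IsBounded (R j)) ∧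
      limitRatio n R =
        ⨅ (S : ℕ → Set (EuclideanSpace ℝ (Fin n))) (_ : IsUnitPartition n S),
          limitRatio n S := by
  obtain ⟨p, hp, hp_le⟩ := exists_isBoundedSubunitPartition_limitRatio_le_iInf hn
  obtain ⟨R, hR, hR_bdd, hR_le⟩ := exists_isUnitPartition_limitRatio_le hn hp
  exact ⟨R, hR, hR_bdd, (hR_le.trans hp_le).antisymm (iInf₂_le R hR)⟩
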